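/- Let d ≥ 2, k ≥ 2, 1 ≤ t ≤ k, let ψ, ψ⊥ ∈ ℂ^d be orthonormal vectors, let Ω = |ψ⟩⟨ψ| + λ(I − |ψ⟩⟨ψ|) with λ ∈ [0,1), and for ε ∈ [0,1] let σ_mix = (1−ε)|ψ⟩⟨ψ| + ε|ψ⊥⟩⟨ψ⊥|. With S_k the cyclic-shift unitary on (ℂ^d)^{⊗k} and D_k = (I + S_k)/2, the passing probability satisfies tr[(Ω^{⊗t} ⊗ I^{⊗(k−t)}) · D_k σ_mix^{⊗k} D_k†] = (1/2)[(1 − (1−λ)ε)^t + (1−ε)^k + λ^t ε^k]. -/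

import Mathlib

open Matrix Kronecker BigOperators

noncomputable section

/-- The cyclically previous index: `m - 1 (mod k)`. -/
def prevIdx {k : ℕ} (m : Fin k) : Fin k :=
  ⟨(m.val + (k - 1)) % k, Nat.mod_lt _ m.pos⟩

/-- The cyclic-shift unitary `S_k` on `(ℂ^d)^{⊗k}`, determined by
`S_k (v_1 ⊗ ⋯ ⊗ v_k) = v_k ⊗ v_1 ⊗ ⋯ ⊗ v_{k-1}`, written as a matrix in the
standard tensor-product basis indexed by functions `Fin k → Fin d`. -/
def cyc (d k : ℕ) : Matrix (Fin k → Fin d) (Fin k → Fin d) ℂ :=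
  fun g f => if g = fun m => f (prevIdx m) then 1 else 0

/-- The SWAP projection `D_k = (I + S_k)/2`. -/
def Dk (d k : ℕ) : Matrix (Fin k → Fin d) (Fin k → Fin d) ℂ :=
  (1 / 2 : ℂ) • (1 + cyc d k)

/-- The tensor product `A_1 ⊗ A_2 ⊗ ⋯ ⊗ A_k` of `d × d` matrices, acting
factor-wise on `(ℂ^d)^{⊗k}`. -/
def tensOp {d k : ℕ} (A : Fin k → Matrix (Fin d) (Fin d) ℂ) :
    Matrix (Fin k → Fin d) (Fin k → Fin d) ℂ :=
  fun g f => ∏ m, A m (g m) (f m)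

/-- The tensor product `v_1 ⊗ ⋯ ⊗ v_k` of vectors in `ℂ^d`. -/
def tensVec {d k : ℕ} (v : Fin k → (Fin d → ℂ)) : (Fin k → Fin d) → ℂ :=
  fun f => ∏ m, v m (f m)

/-- The partial trace over the last `k - 1` tensor factors, mapping matrices on
`(ℂ^d)^{⊗k}` to `d × d` matrices by tracing out factors `2` through `k`. -/
def ptraceFirst {d k : ℕ} (M : Matrix (Fin k → Fin d) (Fin k → Fin d) ℂ) :
    Matrix (Fin d) (Fin d) ℂ :=
  fun a b => ∑ r : {i : Fin k // i.val ≠ 0} → Fin d,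
    M (fun m => if h : m.val = 0 then a else r ⟨m, h⟩)
      (fun m => if h : m.val = 0 then b else r ⟨m, h⟩)
/-! `D_k` commutes with `σ^{⊗k}` and `D_k D_k† = (2 + S_k + S_k†)/4`. Expanding the trace of
`B_1 ⊗ ⋯ ⊗ B_k` against the cyclic shift in the standard basis gives a sum over closed paths of
length `k`, which is the trace of the product of the `B_m` in cyclic order. With `B_m = Ωσ` for
`m ≤ t` and `B_m = σ` otherwise, both `S_k` and `S_k†` contribute `tr[(Ωσ)^t σ^{k-t}]`, by
cyclicity of the trace, so for arbitrary `Ω` and `σ` the passing probability is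
`(1/2)(tr[Ωσ]^t tr[σ]^{k-t} + tr[(Ωσ)^t σ^{k-t}])`. For the noise model, `Ωσ` and `σ` are both
combinations of the orthogonal projections `|ψ⟩⟨ψ|` and `|ψ⊥⟩⟨ψ⊥|`, so these traces are read off
from the coefficients. -/

section PathSums

variable {ι R : Type*} [Fintype ι] [DecidableEq ι] [CommSemiring R] {n : ℕ}

lemma list_prod_ofFn_apply (B : Fin (n + 1) → Matrix ι ι R) (i j : ι) :
    (List.ofFn B).prod i j
      = ∑ g : Fin n → ι, ∏ m, B m (Fin.cons (α := fun _ ↦ ι) i g m)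
          (Fin.snoc (α := fun _ ↦ ι) g j m) := by
  induction n generalizing i with
  | zero => simp [Fin.snoc]
  | succ n ih =>
    rw [List.ofFn_succ, List.prod_cons, mul_apply,
      ← (Fin.consEquiv fun _ ↦ ι).sum_comp, Fintype.sum_prod_type]
    refine Finset.sum_congr rfl fun l _ ↦ ?_
    rw [ih, Finset.mul_sum]
    refine Finset.sum_congr rfl fun g _ ↦ ?_
    have hsnoc : Fin.snoc (α := fun _ ↦ ι) (Fin.consEquiv (fun _ ↦ ι) (l, g)) j
        = Fin.cons l (Fin.snoc (α := fun _ ↦ ι) g j) :=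
      (Fin.cons_snoc_eq_snoc_cons l g j).symm
    rw [Fin.prod_univ_succ (n := n + 1)]
    simp only [hsnoc, Fin.cons_zero, Fin.cons_succ, Fin.consEquiv_apply]

lemma trace_list_prod_ofFn [NeZero n] (B : Fin n → Matrix ι ι R) :
    (List.ofFn B).prod.trace = ∑ g : Fin n → ι, ∏ m, B m (g m) (g (finRotate n m)) := by
  obtain ⟨n, rfl⟩ := Nat.exists_eq_succ_of_ne_zero (NeZero.ne n)
  rw [← (Fin.consEquiv fun _ ↦ ι).sum_comp, Fintype.sum_prod_type]
  simp only [trace, diag_apply, list_prod_ofFn_apply, Fin.snoc_eq_cons_rotate,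
    Fin.consEquiv_apply]

end PathSums

section TensorOperators

variable {d k : ℕ}

lemma tensOp_mul (A B : Fin k → Matrix (Fin d) (Fin d) ℂ) :
    tensOp A * tensOp B = tensOp (fun m ↦ A m * B m) := by
  ext g h
  simp only [mul_apply, tensOp, ← Finset.prod_mul_distrib, Finset.prod_univ_sum,
    Fintype.piFinset_univ]

lemma tensOp_transpose (A : Fin k → Matrix (Fin d) (Fin d) ℂ) :
    (tensOp A)ᵀ = tensOp (fun m ↦ (A m)ᵀ) := rfl

lemma trace_tensOp (A : Fin k → Matrix (Fin d) (Fin d) ℂ) :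
    (tensOp A).trace = ∏ m, (A m).trace := by
  simp only [trace, diag_apply, tensOp, Finset.prod_univ_sum, Fintype.piFinset_univ]

/-- The permutation of the standard basis of `(ℂ^d)^{⊗k}` induced by a permutation `e` of the
tensor factors: the label of factor `m` becomes the label of factor `e m`. Tensor-permutation
operators such as `S_k` are the permutation matrices of these. -/
def basisPerm (d : ℕ) (e : Equiv.Perm (Fin k)) : Equiv.Perm (Fin k → Fin d) :=
  e.arrowCongr (Equiv.refl (Fin d))

lemma commute_permMatrix_tensOp_const (e : Equiv.Perm (Fin k)) (σ : Matrix (Fin d) (Fin d) ℂ) :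
    Commute ((basisPerm d e).permMatrix ℂ) (tensOp fun _ ↦ σ) := by
  rw [Commute, SemiconjBy, PEquiv.toMatrix_toPEquiv_mul, PEquiv.mul_toMatrix_toPEquiv]
  ext g h
  calc ∏ m, σ (g (e.symm m)) (h m)
      = ∏ m, σ (g (e.symm (e m))) (h (e m)) := (Equiv.prod_comp e _).symm
    _ = ∏ m, σ (g m) (h (e m)) := by simp only [e.symm_apply_apply]

end TensorOperators

section CyclicShift

variable {d k : ℕ}

lemma prevIdx_eq_finRotate_symm (m : Fin k) : prevIdx m = (finRotate k).symm m := by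
  have := m.neZero
  rw [finRotate_symm_apply, Fin.ext_iff, Fin.val_sub, add_comm]
  obtain rfl | hk : k = 1 ∨ 1 < k := by have := m.pos; omega
  · simp [prevIdx]
  · simp [prevIdx, Nat.mod_eq_of_lt hk]

lemma cyc_eq_permMatrix (d k : ℕ) :
    cyc d k = (basisPerm d (finRotate k).symm).permMatrix ℂ := by
  ext g f
  have hgf : (g = fun m ↦ f (prevIdx m)) ↔ basisPerm d (finRotate k).symm g = f := by
    simp only [prevIdx_eq_finRotate_symm]
    exact (finRotate k).eq_comp_symm g f
  simp only [cyc, hgf, PEquiv.toMatrix_toPEquiv_apply, Pi.single_apply, eq_comm (a := f)]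

lemma cyc_mul_conjTranspose (d k : ℕ) : cyc d k * (cyc d k)ᴴ = 1 := by
  rw [cyc_eq_permMatrix, conjTranspose_permMatrix, ← permMatrix_mul, inv_mul_cancel,
    permMatrix_one]

lemma cyc_transpose (d k : ℕ) : (cyc d k)ᵀ = (cyc d k)ᴴ := by
  rw [cyc_eq_permMatrix, conjTranspose_permMatrix, transpose_permMatrix]

lemma commute_cyc_tensOp_const (σ : Matrix (Fin d) (Fin d) ℂ) :
    Commute (cyc d k) (tensOp fun _ ↦ σ) :=
  cyc_eq_permMatrix d k ▸ commute_permMatrix_tensOp_const _ σ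

lemma trace_tensOp_mul_cyc_conjTranspose [NeZero k] (B : Fin k → Matrix (Fin d) (Fin d) ℂ) :
    (tensOp B * (cyc d k)ᴴ).trace = (List.ofFn B).prod.trace := by
  rw [trace_list_prod_ofFn, cyc_eq_permMatrix, conjTranspose_permMatrix,
    PEquiv.mul_toMatrix_toPEquiv]
  rfl

lemma trace_tensOp_mul_cyc [NeZero k] (B : Fin k → Matrix (Fin d) (Fin d) ℂ) :
    (tensOp B * cyc d k).trace = (List.ofFn B).reverse.prod.trace := by
  calc (tensOp B * cyc d k).trace
      = (tensOp (fun m ↦ (B m)ᵀ) * (cyc d k)ᴴ).trace := by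
        rw [← trace_transpose, transpose_mul, trace_mul_comm, tensOp_transpose, cyc_transpose]
    _ = (List.ofFn fun m ↦ (B m)ᵀ).prod.trace := trace_tensOp_mul_cyc_conjTranspose _
    _ = (List.ofFn B).reverse.prod.trace := by
        rw [← trace_transpose, transpose_list_prod, List.map_ofFn]
        rfl

lemma Dk_mul_conjTranspose (d k : ℕ) :
    Dk d k * (Dk d k)ᴴ = (1 / 2 : ℂ) • 1 + (1 / 4 : ℂ) • (cyc d k + (cyc d k)ᴴ) := by
  have hDH : (Dk d k)ᴴ = (1 / 2 : ℂ) • (1 + (cyc d k)ᴴ) := by simp [Dk]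
  rw [hDH, Dk, smul_mul_smul_comm, add_mul, mul_add, mul_add, cyc_mul_conjTranspose, mul_one,
    mul_one, one_mul]
  module

lemma trace_tensOp_mul_Dk_conj [NeZero k] (A : Fin k → Matrix (Fin d) (Fin d) ℂ)
    (σ : Matrix (Fin d) (Fin d) ℂ) :
    (tensOp A * (Dk d k * tensOp (fun _ ↦ σ) * (Dk d k)ᴴ)).trace
      = (1 / 2 : ℂ) * ∏ m, (A m * σ).trace
        + (1 / 4 : ℂ) * ((List.ofFn fun m ↦ A m * σ).reverse.prod.trace
          + (List.ofFn fun m ↦ A m * σ).prod.trace) := by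
  have hcomm : Commute (Dk d k) (tensOp fun _ ↦ σ) :=
    ((Commute.one_left _).add_left (commute_cyc_tensOp_const σ)).smul_left _
  rw [hcomm.eq, mul_assoc, Dk_mul_conjTranspose, ← mul_assoc, tensOp_mul]
  simp only [mul_add, mul_smul_comm, mul_one, trace_add, trace_smul, smul_eq_mul, trace_tensOp,
    trace_tensOp_mul_cyc, trace_tensOp_mul_cyc_conjTranspose]

end CyclicShift

lemma list_ofFn_ite_lt {α : Type*} {k t : ℕ} (ht : t ≤ k) (x y : α) :
    (List.ofFn fun m : Fin k ↦ if m.val < t then x else y)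
      = List.replicate t x ++ List.replicate (k - t) y := by
  refine List.ext_getElem (by simp [ht]) fun i _ _ ↦ ?_
  simp [List.getElem_append]

lemma trace_tensOp_ite_lt_mul_Dk_conj {d k t : ℕ} [NeZero k] (ht : t ≤ k)
    (Ω σ : Matrix (Fin d) (Fin d) ℂ) :
    (tensOp (fun m : Fin k ↦ if m.val < t then Ω else 1)
        * (Dk d k * tensOp (fun _ ↦ σ) * (Dk d k)ᴴ)).trace
      = (1 / 2 : ℂ) * ((Ω * σ).trace ^ t * σ.trace ^ (k - t)
          + ((Ω * σ) ^ t * σ ^ (k - t)).trace) := by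
  rw [trace_tensOp_mul_Dk_conj, ← List.prod_ofFn]
  simp only [ite_mul, one_mul, apply_ite trace, list_ofFn_ite_lt ht, List.reverse_append,
    List.reverse_replicate, List.prod_append, List.prod_replicate]
  rw [trace_mul_comm (σ ^ (k - t))]
  ring

section OrthogonalIdempotents

variable {R A : Type*} [CommSemiring R] [Semiring A] [Algebra R A] {p q : A}

lemma smul_add_smul_mul_smul_add_smul (hp : IsIdempotentElem p) (hq : IsIdempotentElem q)
    (hpq : p * q = 0) (hqp : q * p = 0) (a b a' b' : R) :
    (a • p + b • q) * (a' • p + b' • q) = (a * a') • p + (b * b') • q := by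
  simp only [add_mul, mul_add, smul_mul_smul_comm, hp.eq, hq.eq, hpq, hqp, smul_zero, add_zero,
    zero_add]

lemma smul_add_smul_mul_pow (hp : IsIdempotentElem p) (hq : IsIdempotentElem q)
    (hpq : p * q = 0) (hqp : q * p = 0) (a b a' b' : R) (n : ℕ) :
    (a • p + b • q) * (a' • p + b' • q) ^ n = (a * a' ^ n) • p + (b * b' ^ n) • q := by
  induction n with
  | zero => simp
  | succ n ih =>
    rw [pow_succ, ← mul_assoc, ih, smul_add_smul_mul_smul_add_smul hp hq hpq hqp]
    simp only [pow_succ, mul_assoc]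

lemma smul_add_smul_pow_mul_pow (hp : IsIdempotentElem p) (hq : IsIdempotentElem q)
    (hpq : p * q = 0) (hqp : q * p = 0) (a b a' b' : R) {m n : ℕ} (hmn : m + n ≠ 0) :
    (a • p + b • q) ^ m * (a' • p + b' • q) ^ n
      = (a ^ m * a' ^ n) • p + (b ^ m * b' ^ n) • q := by
  have hmul := smul_add_smul_mul_pow (R := R) hp hq hpq hqp
  rcases m with _ | m
  · obtain ⟨n, rfl⟩ := Nat.exists_eq_succ_of_ne_zero (by simpa using hmn : n ≠ 0)
    simp only [pow_zero, one_mul, pow_succ', hmul]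
  · rw [pow_succ', pow_succ', pow_succ', hmul, hmul]

end OrthogonalIdempotents

lemma isIdempotentElem_vecMulVec_star {ι R : Type*} [Fintype ι] [Semiring R] [Star R] {v : ι → R}
    (hv : star v ⬝ᵥ v = 1) : IsIdempotentElem (vecMulVec v (star v)) := by
  simp [IsIdempotentElem, vecMulVec_mul_vecMulVec, hv]

lemma vecMulVec_star_mul_eq_zero {ι R : Type*} [Fintype ι] [Semiring R] [Star R] {v w : ι → R}
    (hvw : star v ⬝ᵥ w = 0) : vecMulVec v (star v) * vecMulVec w (star w) = 0 := by
  simp [vecMulVec_mul_vecMulVec, hvw]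

lemma trace_vecMulVec_star {ι R : Type*} [Fintype ι] [CommSemiring R] [Star R]
    {v : ι → R} (hv : star v ⬝ᵥ v = 1) : (vecMulVec v (star v)).trace = 1 := by
  rw [trace_vecMulVec, dotProduct_comm, hv]

theorem stmt14_general {d k t : ℕ} (hk : k ≠ 0) (ht : t ≤ k) {ψ ψp : Fin d → ℂ}
    (hψ : star ψ ⬝ᵥ ψ = 1) (hψp : star ψp ⬝ᵥ ψp = 1) (horth : star ψ ⬝ᵥ ψp = 0) {lam ε : ℂ}
    {Ω σ : Matrix (Fin d) (Fin d) ℂ}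
    (hΩ : Ω = vecMulVec ψ (star ψ) + lam • (1 - vecMulVec ψ (star ψ)))
    (hσ : σ = (1 - ε) • vecMulVec ψ (star ψ) + ε • vecMulVec ψp (star ψp)) :
    (tensOp (fun m : Fin k ↦ if m.val < t then Ω else 1)
        * (Dk d k * tensOp (fun _ ↦ σ) * (Dk d k)ᴴ)).trace
      = (1 / 2 : ℂ) * ((1 - (1 - lam) * ε) ^ t + (1 - ε) ^ k + lam ^ t * ε ^ k) := by
  have : NeZero k := ⟨hk⟩
  have horth' : star ψp ⬝ᵥ ψ = 0 := by rw [star_dotProduct, horth, star_zero]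
  have htrP := trace_vecMulVec_star hψ
  have htrQ := trace_vecMulVec_star hψp
  have hP := isIdempotentElem_vecMulVec_star hψ
  have hQ := isIdempotentElem_vecMulVec_star hψp
  have hPQ := vecMulVec_star_mul_eq_zero horth
  have hQP := vecMulVec_star_mul_eq_zero horth'
  generalize vecMulVec ψ (star ψ) = P at *
  generalize vecMulVec ψp (star ψp) = Q at *
  have hΩσ : Ω * σ = (1 - ε) • P + (lam * ε) • Q := by
    simp only [hΩ, hσ, add_mul, mul_add, sub_mul, smul_mul_assoc, mul_smul_comm, one_mul, hP.eq,
      hPQ]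
    module
  rw [trace_tensOp_ite_lt_mul_Dk_conj ht, hΩσ, hσ,
    smul_add_smul_pow_mul_pow hP hQ hPQ hQP _ _ _ _ (by omega)]
  simp only [trace_add, trace_smul, htrP, htrQ, smul_eq_mul, mul_one, sub_add_cancel, one_pow,
    mul_pow, mul_assoc, pow_mul_pow_sub _ ht]
  ring

/-- for `σ_mix = (1−ε)|ψ⟩⟨ψ| + ε|ψ⊥⟩⟨ψ⊥|` with `ψ, ψ⊥` orthonormal
and `Ω = |ψ⟩⟨ψ| + λ(I − |ψ⟩⟨ψ|)`, the passing probability is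
`tr[(Ω^{⊗t} ⊗ I^{⊗(k−t)}) · D_k σ_mix^{⊗k} D_k†]
  = (1/2)[(1−(1−λ)ε)^t + (1−ε)^k + λ^t ε^k]`. -/
theorem stmt14 (d k t : ℕ) (hd : 2 ≤ d) (hk : 2 ≤ k) (ht1 : 1 ≤ t) (ht2 : t ≤ k)
    (ψ ψp : Fin d → ℂ) (hψ : star ψ ⬝ᵥ ψ = 1) (hψp : star ψp ⬝ᵥ ψp = 1)
    (horth : star ψ ⬝ᵥ ψp = 0)
    (lam ε : ℝ) (hlam0 : 0 ≤ lam) (hlam1 : lam < 1) (hε0 : 0 ≤ ε) (hε1 : ε ≤ 1)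
    (Ω σ : Matrix (Fin d) (Fin d) ℂ)
    (hΩ : Ω = vecMulVec ψ (star ψ) + (lam : ℂ) • (1 - vecMulVec ψ (star ψ)))
    (hσ : σ = ((1 - ε : ℝ) : ℂ) • vecMulVec ψ (star ψ)
        + ((ε : ℝ) : ℂ) • vecMulVec ψp (star ψp)) :
    (tensOp (fun m : Fin k => if m.val < t then Ω else 1)
        * (Dk d k * tensOp (fun _ : Fin k => σ) * (Dk d k)ᴴ)).trace
      = (1 / 2 : ℂ) * (((1 - (1 - lam) * ε) ^ t + (1 - ε) ^ k
          + lam ^ t * ε ^ k : ℝ) : ℂ) := by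
  push_cast at hσ ⊢
  exact stmt14_general (by omega) ht2 hψ hψp horth hΩ hσ
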